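/- Consider N ≥ 1 agents on a connected simple undirected graph G with neighbor sets N_i, a nonempty finite index set S, and for each i a nonempty compact convex set X_i ⊆ ℝ^{n_i}, a convex function f_i : ℝ^{n_i} → ℝ and a map g_i : ℝ^{n_i} → ℝ^S with every component convex. Assume: (a) there exist x̄_i ∈ X_i with ∑_i g_i(x̄_i) ≺ 0 componentwise (Slater condition), and let f* := inf{ ∑_i f_i(x_i) : x_i ∈ X_i, ∑_i g_i(x_i) ⪯ 0 }; (b) there exists μ* ∈ ℝ^S with μ* ⪰ 0 and inf{ ∑_i ( f_i(x_i) + ⟨μ*, g_i(x_i)⟩ ) : x_i ∈ X_i for all i } = f*, and M > ∑_s μ*_s; (c) step sizes γ^t ≥ 0 satisfy ∑_{t=0}^∞ γ^t = ∞ and ∑_{t=0}^∞ (γ^t)² < ∞. Suppose sequences λ^t : {1,…,N} × {1,…,N} → ℝ^S (with arbitrary λ^0), x_i^{t+1} ∈ ℝ^{n_i}, ρ_i^{t+1} ∈ ℝ and μ_i^{t+1} ∈ Δ_M satisfy for every t and every i, with δ_i^t := ∑_{j ∈ N_i} ( λ^t(i,j) − λ^t(j,i) ): (1) (x_i^{t+1},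 ρ_i^{t+1}) minimizes (x,ρ) ↦ f_i(x) + M ρ over { x ∈ X_i, ρ ≥ 0, g_i(x) + δ_i^t ⪯ ρ·𝟏 }; (2) μ_i^{t+1} maximizes μ ↦ q_i(μ) + ⟨μ, δ_i^t⟩ over Δ_M, where q_i(μ) := inf_{x ∈ X_i} ( f_i(x) + ⟨μ, g_i(x)⟩ ); (3) λ^{t+1}(i,j) = λ^t(i,j) − γ^t ( μ_i^{t+1} − μ_j^{t+1} ) for all adjacent pairs (i,j), and λ^{t+1}(i,j) = λ^t(i,j) otherwise. Then the sequence ∑_{i=1}^N ( f_i(x_i^t) + M ρ_i^t ) converges to f* as t → ∞. -/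

import Mathlib

/-!
Write `p i d` for the optimal value of agent `i`'s relaxed problem when the constraint is shifted by
`d`. The algorithm is a subgradient method for `Φ(λ) = ∑ i, p i (δ i)` over the edge variables `λ`.
By minimax over the compact set `Δ_M`, `p i d = max (q i ν + ⟨ν, d⟩)` over `ν ∈ Δ_M`, so the local
dual solutions are subgradients of the `p i`; since the net outflow `λ ↦ δ` is adjoint to taking
differences along edges, the multiplier update is exactly a subgradient step for `Φ`.

The minimum of `Φ` is `f*`: net outflows sum to zero, so the dual value of `μ* ∈ Δ_M` is a lower
bound, and on a connected graph the slack at an optimum can be routed so that `ρ = 0` is feasible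
for every agent. The distances to a minimizer show that `∑ t, γ t * (Φ(λ t) - f*)` converges, and
the gap `Φ(λ t) - f*` grows by at most `C * γ t` per step, which forces it to tend to `0`.
-/

open Filter Topology Set
open scoped InnerProductSpace

section DeterministicRobbinsSiegmund

variable {b e : ℕ → ℝ}

theorem exists_tendsto_of_le_add_summable (hb : BddBelow (range b))
    (hstep : ∀ t, b (t + 1) ≤ b t + e t) (he : Summable e) : ∃ ℓ, Tendsto b atTop (𝓝 ℓ) := by
  have hE : Tendsto (fun t => ∑ k ∈ Finset.range t, e k) atTop (𝓝 (∑' k, e k)) :=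
    he.tendsto_sum_tsum_nat
  have hanti : Antitone fun t => b t - ∑ k ∈ Finset.range t, e k :=
    antitone_nat_of_succ_le fun t => by
      rw [Finset.sum_range_succ]
      linarith [hstep t]
  obtain ⟨m, hm⟩ := hb
  obtain ⟨B, hB⟩ := hE.bddAbove_range
  have hbdd : BddBelow (range fun t => b t - ∑ k ∈ Finset.range t, e k) := by
    refine ⟨m - B, ?_⟩
    rintro _ ⟨t, rfl⟩
    exact sub_le_sub (hm (mem_range_self t)) (hB (mem_range_self t))
  exact ⟨_, by simpa using (tendsto_atTop_ciInf hanti hbdd).add hE⟩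

theorem summable_of_le_sub_add_summable {r : ℕ → ℝ} (hb : BddBelow (range b)) (hr : ∀ t, 0 ≤ r t)
    (hstep : ∀ t, b (t + 1) ≤ b t - r t + e t) (he : Summable e) : Summable r := by
  obtain ⟨m, hm⟩ := hb
  obtain ⟨B, hB⟩ := he.tendsto_sum_tsum_nat.bddAbove_range
  have htel (T : ℕ) :
      ∑ t ∈ Finset.range T, r t ≤ b 0 - b T + ∑ t ∈ Finset.range T, e t := by
    induction T with
    | zero => simp
    | succ T ih =>
      rw [Finset.sum_range_succ, Finset.sum_range_succ]
      linarith [hstep T]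
  refine summable_of_sum_range_le (c := b 0 - m + B) hr fun T => (htel T).trans ?_
  exact add_le_add (sub_le_sub_left (hm (mem_range_self T)) _) (hB (mem_range_self T))

end DeterministicRobbinsSiegmund

section WeightedSummability

variable {a γ : ℕ → ℝ}

theorem frequently_lt_of_summable_mul (hγ : ∀ t, 0 ≤ γ t) (hdiv : ¬ Summable γ)
    (hsum : Summable fun t => γ t * a t) {ε : ℝ} (hε : 0 < ε) : ∃ᶠ t in atTop, a t < ε := by
  intro hge
  refine hdiv ((hsum.div_const ε).of_norm_bounded_eventually_nat ?_)
  filter_upwards [hge] with t ht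
  rw [Real.norm_of_nonneg (hγ t), le_div_iff₀ hε]
  exact mul_le_mul_of_nonneg_left (not_lt.1 ht) (hγ t)

-- While `a t ≥ ε` the increment is at most `(C / ε) * (γ t * a t)`; otherwise AM-GM gives
-- `C * γ t ≤ ε + (C * γ t) ^ 2 / (4 * ε)`. Both errors are summable.
theorem exists_tendsto_max_of_summable_mul (ha : ∀ t, 0 ≤ a t) (hγ : ∀ t, 0 ≤ γ t) {C : ℝ}
    (hC : 0 ≤ C) (hstep : ∀ t, a (t + 1) ≤ a t + C * γ t) (hsq : Summable fun t => γ t ^ 2)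
    (hsum : Summable fun t => γ t * a t) {ε : ℝ} (hε : 0 < ε) :
    ∃ ℓ, Tendsto (fun t => max (a t) (2 * ε)) atTop (𝓝 ℓ) := by
  refine exists_tendsto_of_le_add_summable
    (e := fun t => C ^ 2 / (4 * ε) * γ t ^ 2 + C / ε * (γ t * a t))
    ⟨2 * ε, ?_⟩ (fun t => ?_) ((hsq.mul_left _).add (hsum.mul_left _))
  · rintro _ ⟨t, rfl⟩
    exact le_max_right _ _
  have herr₁ : 0 ≤ C ^ 2 / (4 * ε) * γ t ^ 2 := by positivity
  have herr₂ : 0 ≤ C / ε * (γ t * a t) := by have := ha t; have := hγ t; positivity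
  refine max_le ?_ (by linarith [le_max_right (a t) (2 * ε)])
  rcases le_or_gt ε (a t) with hlarge | hsmall
  · have : C * γ t ≤ C / ε * (γ t * a t) := calc
      C * γ t = C / ε * (γ t * ε) := by field_simp
      _ ≤ C / ε * (γ t * a t) := by have := hγ t; gcongr
    linarith [hstep t, le_max_left (a t) (2 * ε)]
  · have : C * γ t ≤ ε + C ^ 2 / (4 * ε) * γ t ^ 2 := by
      have hamgm : ε + C ^ 2 / (4 * ε) * γ t ^ 2 - C * γ t = (2 * ε - C * γ t) ^ 2 / (4 * ε) := by
        field_simp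
        ring
      have : 0 ≤ (2 * ε - C * γ t) ^ 2 / (4 * ε) := by positivity
      linarith
    linarith [hstep t, le_max_right (a t) (2 * ε)]

theorem tendsto_zero_of_summable_mul (ha : ∀ t, 0 ≤ a t) (hγ : ∀ t, 0 ≤ γ t) {C : ℝ}
    (hC : 0 ≤ C) (hstep : ∀ t, a (t + 1) ≤ a t + C * γ t) (hdiv : ¬ Summable γ)
    (hsq : Summable fun t => γ t ^ 2) (hsum : Summable fun t => γ t * a t) :
    Tendsto a atTop (𝓝 0) := by
  refine tendsto_order.2 ⟨fun c hc => .of_forall fun t => hc.trans_le (ha t), fun c hc => ?_⟩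
  have hε : 0 < c / 4 := by positivity
  obtain ⟨ℓ, hℓ⟩ := exists_tendsto_max_of_summable_mul ha hγ hC hstep hsq hsum hε
  have hℓ_le : ℓ ≤ 2 * (c / 4) :=
    le_of_tendsto_of_frequently hℓ <| (frequently_lt_of_summable_mul hγ hdiv hsum hε).mono
      fun t ht => max_le (by linarith) le_rfl
  filter_upwards [hℓ.eventually (gt_mem_nhds (show ℓ < c by linarith))] with t ht
  exact (le_max_left _ _).trans_lt ht

end WeightedSummability

section SubgradientMethod

variable {H : Type*} [NormedAddCommGroup H] [InnerProductSpace ℝ H]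
  {Φ : H → ℝ} {y u : ℕ → H} {ystar : H} {γ : ℕ → ℝ} {c : ℝ}

theorem summable_mul_sub_of_subgradient_step (hγ : ∀ t, 0 ≤ γ t)
    (hsq : Summable fun t => γ t ^ 2) (hmin : ∀ t, Φ ystar ≤ Φ (y t))
    (hsub : ∀ t, Φ (y t) + ⟪u t, ystar - y t⟫_ℝ ≤ Φ ystar) (hu : ∀ t, ‖u t‖ ≤ c)
    (hy : ∀ t, y (t + 1) = y t - γ t • u t) :
    Summable fun t => γ t * (Φ (y t) - Φ ystar) := by
  refine (summable_mul_left_iff two_ne_zero).1 <|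
    summable_of_le_sub_add_summable (b := fun t => ‖y t - ystar‖ ^ 2)
      (e := fun t => c ^ 2 * γ t ^ 2) ⟨0, ?_⟩ (fun t => ?_) (fun t => ?_) (hsq.mul_left _)
  · rintro _ ⟨t, rfl⟩
    positivity
  · exact mul_nonneg zero_le_two (mul_nonneg (hγ t) (sub_nonneg.2 (hmin t)))
  have hexpand : ‖y (t + 1) - ystar‖ ^ 2 =
      ‖y t - ystar‖ ^ 2 + 2 * (γ t * ⟪u t, ystar - y t⟫_ℝ) + ‖u t‖ ^ 2 * γ t ^ 2 := by
    rw [hy, sub_right_comm, norm_sub_sq_real, norm_smul, mul_pow, Real.norm_eq_abs, sq_abs,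
      inner_smul_right, real_inner_comm, ← neg_sub ystar, inner_neg_right]
    ring
  have hprogress := mul_le_mul_of_nonneg_left (hsub t) (hγ t)
  have hnorm : ‖u t‖ ^ 2 * γ t ^ 2 ≤ c ^ 2 * γ t ^ 2 := by gcongr; exact hu t
  linarith

theorem tendsto_of_subgradient_step (hγ : ∀ t, 0 ≤ γ t) (hdiv : ¬ Summable γ)
    (hsq : Summable fun t => γ t ^ 2) (hmin : ∀ t, Φ ystar ≤ Φ (y t))
    (hsub : ∀ t z, Φ (y t) + ⟪u t, z - y t⟫_ℝ ≤ Φ z) (hu : ∀ t, ‖u t‖ ≤ c)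
    (hy : ∀ t, y (t + 1) = y t - γ t • u t) :
    Tendsto (fun t => Φ (y t)) atTop (𝓝 (Φ ystar)) := by
  have hstep (t : ℕ) : Φ (y (t + 1)) - Φ ystar ≤ Φ (y t) - Φ ystar + c ^ 2 * γ t := by
    have hinner : |⟪u (t + 1), u t⟫_ℝ| ≤ c ^ 2 := calc
      |⟪u (t + 1), u t⟫_ℝ| ≤ ‖u (t + 1)‖ * ‖u t‖ := abs_real_inner_le_norm _ _
      _ ≤ c * c := mul_le_mul (hu _) (hu t) (norm_nonneg _) ((norm_nonneg _).trans (hu t))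
      _ = c ^ 2 := (sq c).symm
    have hback := hsub (t + 1) (y t)
    rw [hy t, sub_sub_cancel, inner_smul_right, ← hy t] at hback
    linarith [mul_le_mul_of_nonneg_left (neg_le_of_abs_le hinner) (hγ t)]
  rw [← tendsto_sub_nhds_zero_iff]
  exact tendsto_zero_of_summable_mul (fun t => sub_nonneg.2 (hmin t)) hγ (sq_nonneg c) hstep hdiv
    hsq (summable_mul_sub_of_subgradient_step hγ hsq hmin (fun t => hsub t ystar) hu hy)

end SubgradientMethod

section RelaxedProblem

variable {E S : Type*} {X : Set E} {f : E → ℝ} {g : E → S → ℝ} {M : ℝ} {d : S → ℝ}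

/-- The feasible pairs `(x, ρ)` of an agent's relaxed problem: `x ∈ X` may violate the constraint
`g x + d ⪯ 0` by at most `ρ ≥ 0` in each component. -/
def relaxedFeasibleSet (X : Set E) (g : E → S → ℝ) (d : S → ℝ) : Set (E × ℝ) :=
  {p | p.1 ∈ X ∧ 0 ≤ p.2 ∧ ∀ s, g p.1 s + d s ≤ p.2}

/-- The optimal value of an agent's relaxed problem, in which the violation `ρ` costs `M * ρ`. -/
noncomputable def relaxedValue (X : Set E) (f : E → ℝ) (g : E → S → ℝ) (M : ℝ) (d : S → ℝ) : ℝ :=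
  sInf {y | ∃ p ∈ relaxedFeasibleSet X g d, f p.1 + M * p.2 = y}

/-- The pair `(x, ρ)` solves an agent's relaxed problem. -/
def IsRelaxedSolution (X : Set E) (f : E → ℝ) (g : E → S → ℝ) (M : ℝ) (d : S → ℝ) (x : E)
    (ρ : ℝ) : Prop :=
  (x, ρ) ∈ relaxedFeasibleSet X g d ∧
    ∀ x' r, x' ∈ X → 0 ≤ r → (∀ s, g x' s + d s ≤ r) → f x + M * ρ ≤ f x' + M * r

theorem relaxedFeasibleSet_nonempty [Finite S] (hX : X.Nonempty) :
    (relaxedFeasibleSet X g d).Nonempty := by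
  obtain ⟨x, hx⟩ := hX
  obtain ⟨r, hr⟩ := (finite_range (g x + d)).bddAbove
  exact ⟨(x, max r 0), hx, le_max_right _ _,
    fun s => (hr (mem_range_self s)).trans (le_max_left _ _)⟩

theorem relaxedValue_le (hf : BddBelow (f '' X)) (hM : 0 ≤ M) {p : E × ℝ}
    (hp : p ∈ relaxedFeasibleSet X g d) : relaxedValue X f g M d ≤ f p.1 + M * p.2 := by
  obtain ⟨m, hm⟩ := hf
  refine csInf_le ⟨m, ?_⟩ ⟨p, hp, rfl⟩
  rintro _ ⟨p', ⟨hx, hρ, -⟩, rfl⟩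
  exact (hm (mem_image_of_mem f hx)).trans (le_add_of_nonneg_right (mul_nonneg hM hρ))

theorem IsRelaxedSolution.relaxedValue_eq {x : E} {ρ : ℝ}
    (hsol : IsRelaxedSolution X f g M d x ρ) :
    relaxedValue X f g M d = f x + M * ρ := by
  have hleast : IsLeast {y | ∃ p ∈ relaxedFeasibleSet X g d, f p.1 + M * p.2 = y}
      (f x + M * ρ) :=
    ⟨⟨(x, ρ), hsol.1, rfl⟩, by
      rintro _ ⟨p, ⟨hx, hρ, hviol⟩, rfl⟩; exact hsol.2 p.1 p.2 hx hρ hviol⟩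
  exact hleast.csInf_eq

end RelaxedProblem

section CompactConvexProgram

variable {E S : Type*}

/-- A convex program "minimize `f` over `X` subject to `g ⪯ 0`" with nonempty compact `X` and lower
semicontinuous data. Convexity of `X` is part of the convexity of `f` on `X`. -/
structure IsCompactConvexProgram [TopologicalSpace E] [AddCommGroup E] [Module ℝ E]
    (X : Set E) (f : E → ℝ) (g : E → S → ℝ) : Prop where
  nonempty : X.Nonempty
  isCompact : IsCompact X
  convexOn_cost : ConvexOn ℝ X f
  lowerSemicontinuousOn_cost : LowerSemicontinuousOn f X
  convexOn_constraint : ∀ s, ConvexOn ℝ X fun x => g x s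
  lowerSemicontinuousOn_constraint : ∀ s, LowerSemicontinuousOn (fun x => g x s) X

theorem IsCompactConvexProgram.of_convexOn_univ [NormedAddCommGroup E] [NormedSpace ℝ E]
    [FiniteDimensional ℝ E] {X : Set E} {f : E → ℝ} {g : E → S → ℝ} (hne : X.Nonempty)
    (hcompact : IsCompact X) (hconvex : Convex ℝ X) (hf : ConvexOn ℝ univ f)
    (hg : ∀ s, ConvexOn ℝ univ fun x => g x s) :
    IsCompactConvexProgram X f g where
  nonempty := hne
  isCompact := hcompact
  convexOn_cost := hf.subset (subset_univ X) hconvex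
  lowerSemicontinuousOn_cost :=
    hf.locallyLipschitz.continuous.lowerSemicontinuous.lowerSemicontinuousOn X
  convexOn_constraint s := (hg s).subset (subset_univ X) hconvex
  lowerSemicontinuousOn_constraint s :=
    (hg s).locallyLipschitz.continuous.lowerSemicontinuous.lowerSemicontinuousOn X

end CompactConvexProgram

section LocalDuality

variable {E S : Type*} [Fintype S]

/-- The set `Δ_M` of multipliers `ν ⪰ 0` with total mass at most `M`. -/
def multiplierSet (S : Type*) [Fintype S] (M : ℝ) : Set (S → ℝ) :=
  {ν | (∀ s, 0 ≤ ν s) ∧ ∑ s, ν s ≤ M}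

/-- The Lagrangian of the program "minimize `f` subject to `g ⪯ 0`" at the multiplier `ν`. -/
def lagrangian (f : E → ℝ) (g : E → S → ℝ) (ν : S → ℝ) (x : E) : ℝ :=
  f x + ν ⬝ᵥ g x

/-- The dual function `q` of the program "minimize `f` over `X` subject to `g ⪯ 0`". -/
noncomputable def dualFunction (X : Set E) (f : E → ℝ) (g : E → S → ℝ) (ν : S → ℝ) : ℝ :=
  sInf {y | ∃ z ∈ X, lagrangian f g ν z = y}

/-- The multiplier `μ` maximizes `ν ↦ q ν + ⟨ν, d⟩` over `Δ_M`, which is the dual of an agent's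
relaxed problem. -/
def IsRelaxedDualSolution (X : Set E) (f : E → ℝ) (g : E → S → ℝ) (M : ℝ) (d μ : S → ℝ) : Prop :=
  μ ∈ multiplierSet S M ∧
    ∀ ν : S → ℝ, (∀ s, 0 ≤ ν s) → ∑ s, ν s ≤ M →
      dualFunction X f g ν + ν ⬝ᵥ d ≤ dualFunction X f g μ + μ ⬝ᵥ d

section MultiplierSet

variable {M : ℝ}

theorem zero_mem_multiplierSet (hM : 0 ≤ M) : 0 ∈ multiplierSet S M :=
  ⟨fun _ => le_rfl, by simpa using hM⟩

theorem convex_multiplierSet : Convex ℝ (multiplierSet S M) := by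
  have hset : multiplierSet S M = Ici 0 ∩ {ν | ∑ s, ν s ≤ M} := rfl
  rw [hset]
  refine (convex_Ici 0).inter (convex_halfSpace_le ⟨fun u v => ?_, fun c v => ?_⟩ M)
  · exact Finset.sum_add_distrib
  · exact (Finset.mul_sum _ _ _).symm

theorem isCompact_multiplierSet : IsCompact (multiplierSet S M) := by
  have hclosed : IsClosed (multiplierSet S M) :=
    (isClosed_Ici (a := (0 : S → ℝ))).inter <|
      isClosed_le (continuous_finsetSum _ fun s _ => continuous_apply s) continuous_const
  refine (isCompact_Icc (a := (0 : S → ℝ)) (b := fun _ => M)).of_isClosed_subset hclosed ?_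
  exact fun ν hν => ⟨hν.1, fun s =>
    (Finset.single_le_sum (fun s _ => hν.1 s) (Finset.mem_univ s)).trans hν.2⟩

theorem dotProduct_le_of_mem_multiplierSet {ν w : S → ℝ} {r : ℝ} (hν : ν ∈ multiplierSet S M)
    (hr : 0 ≤ r) (hw : ∀ s, w s ≤ r) : ν ⬝ᵥ w ≤ M * r := calc
  ν ⬝ᵥ w ≤ ∑ s, ν s * r := Finset.sum_le_sum fun s _ => mul_le_mul_of_nonneg_left (hw s) (hν.1 s)
  _ = (∑ s, ν s) * r := (Finset.sum_mul _ _ _).symm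
  _ ≤ M * r := mul_le_mul_of_nonneg_right hν.2 hr

theorem exists_mem_multiplierSet_dotProduct_eq (hM : 0 ≤ M) (w : S → ℝ) :
    ∃ ν ∈ multiplierSet S M, ∃ r, 0 ≤ r ∧ (∀ s, w s ≤ r) ∧ ν ⬝ᵥ w = M * r := by
  classical
  by_cases hw : ∀ s, w s ≤ 0
  · exact ⟨0, zero_mem_multiplierSet hM, 0, le_rfl, hw, by simp⟩
  obtain ⟨s, hs⟩ := not_forall.1 hw
  obtain ⟨smax, -, hmax⟩ := Finset.exists_max_image Finset.univ w ⟨s, Finset.mem_univ s⟩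
  refine ⟨Pi.single smax M, ⟨fun s => ?_, by simp⟩, w smax, ?_,
    fun s => hmax s (Finset.mem_univ s), single_dotProduct _ _ _⟩
  · exact (Pi.single_nonneg (α := fun _ => ℝ)).2 hM s
  · exact (not_le.1 hs).le.trans (hmax s (Finset.mem_univ s))

end MultiplierSet

section Lagrangian

variable {X : Set E} {f : E → ℝ} {g : E → S → ℝ} {ν : S → ℝ}

theorem convexOn_lagrangian [AddCommGroup E] [Module ℝ E] (hf : ConvexOn ℝ X f)
    (hg : ∀ s, ConvexOn ℝ X fun x => g x s) (hν : ∀ s, 0 ≤ ν s) :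
    ConvexOn ℝ X (lagrangian f g ν) := by
  refine hf.add ⟨hf.1, fun x hx y hy a b ha hb hab => ?_⟩
  rw [← dotProduct_smul, ← dotProduct_smul, ← dotProduct_add]
  exact dotProduct_le_dotProduct_of_nonneg_left (fun s => (hg s).2 hx hy ha hb hab) hν

theorem lowerSemicontinuousOn_lagrangian [TopologicalSpace E] (hf : LowerSemicontinuousOn f X)
    (hg : ∀ s, LowerSemicontinuousOn (fun x => g x s) X) (hν : ∀ s, 0 ≤ ν s) :
    LowerSemicontinuousOn (lagrangian f g ν) X :=
  hf.add <| lowerSemicontinuousOn_sum fun s _ =>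
    (continuous_const_mul (ν s)).comp_lowerSemicontinuousOn (hg s)
      (monotone_mul_left_of_nonneg (hν s))

end Lagrangian

namespace IsCompactConvexProgram

variable [TopologicalSpace E] [AddCommGroup E] [Module ℝ E]
  {X : Set E} {f : E → ℝ} {g : E → S → ℝ} {M : ℝ} {d ν : S → ℝ}

theorem exists_isMinOn_lagrangian (h : IsCompactConvexProgram X f g) (hν : ∀ s, 0 ≤ ν s) :
    ∃ z ∈ X, IsMinOn (lagrangian f g ν) X z :=
  (lowerSemicontinuousOn_lagrangian h.lowerSemicontinuousOn_cost
    h.lowerSemicontinuousOn_constraint hν).exists_isMinOn h.nonempty h.isCompact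

theorem exists_dualFunction_eq (h : IsCompactConvexProgram X f g) (hν : ∀ s, 0 ≤ ν s) :
    ∃ z ∈ X, dualFunction X f g ν = lagrangian f g ν z := by
  obtain ⟨z, hz, hmin⟩ := h.exists_isMinOn_lagrangian hν
  have hleast : IsLeast {y | ∃ z ∈ X, lagrangian f g ν z = y} (lagrangian f g ν z) :=
    ⟨⟨z, hz, rfl⟩, by rintro _ ⟨x, hx, rfl⟩; exact hmin hx⟩
  exact ⟨z, hz, hleast.csInf_eq⟩

theorem dualFunction_le (h : IsCompactConvexProgram X f g) (hν : ∀ s, 0 ≤ ν s) {x : E}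
    (hx : x ∈ X) : dualFunction X f g ν ≤ lagrangian f g ν x :=
  csInf_le ((lowerSemicontinuousOn_lagrangian h.lowerSemicontinuousOn_cost
    h.lowerSemicontinuousOn_constraint hν).bddBelow_of_isCompact h.isCompact) ⟨x, hx, rfl⟩

theorem dualFunction_add_le_of_mem_relaxedFeasibleSet (h : IsCompactConvexProgram X f g)
    (hν : ν ∈ multiplierSet S M) {p : E × ℝ} (hp : p ∈ relaxedFeasibleSet X g d) :
    dualFunction X f g ν + ν ⬝ᵥ d ≤ f p.1 + M * p.2 := by
  obtain ⟨hx, hρ, hviol⟩ := hp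
  have hdual := h.dualFunction_le hν.1 hx
  have hpenalty := dotProduct_le_of_mem_multiplierSet (w := g p.1 + d) hν hρ hviol
  rw [dotProduct_add] at hpenalty
  unfold lagrangian at hdual
  linarith

theorem dualFunction_add_le_relaxedValue (h : IsCompactConvexProgram X f g)
    (hν : ν ∈ multiplierSet S M) : dualFunction X f g ν + ν ⬝ᵥ d ≤ relaxedValue X f g M d := by
  refine le_csInf ?_ ?_
  · obtain ⟨p, hp⟩ := relaxedFeasibleSet_nonempty (g := g) (d := d) h.nonempty
    exact ⟨_, p, hp, rfl⟩
  · rintro _ ⟨p, hp, rfl⟩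
    exact h.dualFunction_add_le_of_mem_relaxedFeasibleSet hν hp

theorem exists_isSaddlePointOn_lagrangian [IsTopologicalAddGroup E] [ContinuousSMul ℝ E]
    (h : IsCompactConvexProgram X f g) (hM : 0 ≤ M) :
    ∃ x ∈ X, ∃ ν ∈ multiplierSet S M, IsSaddlePointOn X (multiplierSet S M)
      (fun x ν => lagrangian f g ν x + ν ⬝ᵥ d) x ν := by
  refine Sion.exists_isSaddlePointOn h.nonempty h.convexOn_cost.1 h.isCompact
    (fun ν hν => ?_) (fun ν hν => ?_) convex_multiplierSet ⟨0, zero_mem_multiplierSet hM⟩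
    isCompact_multiplierSet (fun x _ => ?_) (fun x _ => ?_)
  · exact (lowerSemicontinuousOn_lagrangian h.lowerSemicontinuousOn_cost
      h.lowerSemicontinuousOn_constraint hν.1).add lowerSemicontinuousOn_const
  · exact ((convexOn_lagrangian h.convexOn_cost h.convexOn_constraint hν.1).add_const
      _).quasiconvexOn
  · unfold lagrangian dotProduct
    exact (Continuous.upperSemicontinuous (by fun_prop)).upperSemicontinuousOn _
  · refine ConcaveOn.quasiconcaveOn ⟨convex_multiplierSet, fun u _ v _ a b _ _ hab => le_of_eq ?_⟩
    have hsplit : f x = a * f x + b * f x := by rw [← add_mul, hab, one_mul]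
    simp only [lagrangian, add_dotProduct, smul_dotProduct, smul_eq_mul]
    linarith

theorem relaxedValue_le_dualFunction_add [IsTopologicalAddGroup E] [ContinuousSMul ℝ E]
    (h : IsCompactConvexProgram X f g) (hM : 0 ≤ M) :
    ∃ ν ∈ multiplierSet S M, relaxedValue X f g M d ≤ dualFunction X f g ν + ν ⬝ᵥ d := by
  obtain ⟨x, hx, ν, hν, hsaddle⟩ := h.exists_isSaddlePointOn_lagrangian (d := d) hM
  obtain ⟨z, hz, hdual⟩ := h.exists_dualFunction_eq hν.1
  obtain ⟨ν', hν', r, hr, hviol, hpenalty⟩ :=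
    exists_mem_multiplierSet_dotProduct_eq hM (g x + d)
  refine ⟨ν, hν, ?_⟩
  calc relaxedValue X f g M d ≤ f x + M * r :=
      relaxedValue_le (h.lowerSemicontinuousOn_cost.bddBelow_of_isCompact h.isCompact) hM
        (p := (x, r)) ⟨hx, hr, hviol⟩
    _ = lagrangian f g ν' x + ν' ⬝ᵥ d := by
      rw [← hpenalty, dotProduct_add, lagrangian, add_assoc]
    _ ≤ lagrangian f g ν z + ν ⬝ᵥ d := hsaddle z hz ν' hν'
    _ = dualFunction X f g ν + ν ⬝ᵥ d := by rw [hdual]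

theorem relaxedValue_eq_of_isRelaxedDualSolution [IsTopologicalAddGroup E] [ContinuousSMul ℝ E]
    (h : IsCompactConvexProgram X f g) (hM : 0 ≤ M) (hν : IsRelaxedDualSolution X f g M d ν) :
    relaxedValue X f g M d = dualFunction X f g ν + ν ⬝ᵥ d := by
  obtain ⟨ν', hν', hle⟩ := h.relaxedValue_le_dualFunction_add (d := d) hM
  exact le_antisymm (hle.trans (hν.2 ν' hν'.1 hν'.2)) (h.dualFunction_add_le_relaxedValue hν.1)

end IsCompactConvexProgram

end LocalDuality

section CoupledProblem

variable {ι S : Type*} [Fintype ι] {E : ι → Type*}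

/-- The points `x` with `x i ∈ X i` that satisfy the coupling constraint `∑ i, g i (x i) ⪯ 0`. -/
def coupledFeasibleSet (X : ∀ i, Set (E i)) (g : ∀ i, E i → S → ℝ) : Set (∀ i, E i) :=
  {x | (∀ i, x i ∈ X i) ∧ ∀ s, ∑ i, g i (x i) s ≤ 0}

/-- The optimal value `f*` of the constraint-coupled problem. -/
noncomputable def coupledValue (X : ∀ i, Set (E i)) (f : ∀ i, E i → ℝ) (g : ∀ i, E i → S → ℝ) :
    ℝ :=
  sInf {y | ∃ x : ∀ i, E i, (∀ i, x i ∈ X i) ∧ (∀ s, ∑ i, g i (x i) s ≤ 0) ∧ ∑ i, f i (x i) = y}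

/-- The dual function of the constraint-coupled problem. -/
noncomputable def coupledDualFunction [Fintype S] (X : ∀ i, Set (E i)) (f : ∀ i, E i → ℝ)
    (g : ∀ i, E i → S → ℝ) (ν : S → ℝ) : ℝ :=
  sInf {y | ∃ x : ∀ i, E i, (∀ i, x i ∈ X i) ∧ ∑ i, lagrangian (f i) (g i) ν (x i) = y}

variable [∀ i, TopologicalSpace (E i)] {X : ∀ i, Set (E i)} {f : ∀ i, E i → ℝ}
  {g : ∀ i, E i → S → ℝ}

theorem lowerSemicontinuousOn_sum_apply (hf : ∀ i, LowerSemicontinuousOn (f i) (X i)) :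
    LowerSemicontinuousOn (fun x : ∀ i, E i => ∑ i, f i (x i)) (univ.pi X) :=
  lowerSemicontinuousOn_sum fun i _ =>
    (hf i).comp (continuous_apply i).continuousOn fun _ hx => hx i (mem_univ i)

theorem isCompact_coupledFeasibleSet (hX : ∀ i, IsCompact (X i))
    (hg : ∀ i s, LowerSemicontinuousOn (fun x => g i x s) (X i)) :
    IsCompact (coupledFeasibleSet X g) := by
  have hlsc (s : S) := lowerSemicontinuousOn_sum_apply fun i => hg i s
  choose K hK hpre using fun s => lowerSemicontinuousOn_iff_preimage_Iic.1 (hlsc s) 0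
  have hset : coupledFeasibleSet X g = univ.pi X ∩ ⋂ s, K s := by
    ext x
    have hmem (hx : x ∈ univ.pi X) (s : S) : x ∈ K s ↔ ∑ i, g i (x i) s ≤ 0 := by
      simpa [hx] using (Set.ext_iff.1 (hpre s) x).symm
    constructor
    · rintro ⟨hx, hsum⟩
      have hx' : x ∈ univ.pi X := fun i _ => hx i
      exact ⟨hx', mem_iInter.2 fun s => (hmem hx' s).2 (hsum s)⟩
    · rintro ⟨hx, hxK⟩
      exact ⟨fun i => hx i (mem_univ i), fun s => (hmem hx s).1 (mem_iInter.1 hxK s)⟩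
  rw [hset]
  exact (isCompact_univ_pi hX).inter_right (isClosed_iInter hK)

theorem exists_mem_coupledFeasibleSet_sum_eq (hX : ∀ i, IsCompact (X i))
    (hf : ∀ i, LowerSemicontinuousOn (f i) (X i))
    (hg : ∀ i s, LowerSemicontinuousOn (fun x => g i x s) (X i))
    (hfeas : (coupledFeasibleSet X g).Nonempty) :
    ∃ x ∈ coupledFeasibleSet X g, ∑ i, f i (x i) = coupledValue X f g := by
  obtain ⟨x, hx, hmin⟩ :=
    ((lowerSemicontinuousOn_sum_apply hf).mono fun x hx i _ => hx.1 i).exists_isMinOn hfeas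
      (isCompact_coupledFeasibleSet hX hg)
  refine ⟨x, hx, Eq.symm (IsLeast.csInf_eq ⟨⟨x, hx.1, hx.2, rfl⟩, ?_⟩)⟩
  rintro _ ⟨z, hzX, hz, rfl⟩
  exact hmin ⟨hzX, hz⟩

theorem coupledDualFunction_eq_sum_dualFunction [Fintype S] [∀ i, AddCommGroup (E i)]
    [∀ i, Module ℝ (E i)] (hP : ∀ i, IsCompactConvexProgram (X i) (f i) (g i)) {ν : S → ℝ}
    (hν : ∀ s, 0 ≤ ν s) :
    coupledDualFunction X f g ν = ∑ i, dualFunction (X i) (f i) (g i) ν := by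
  choose z hz hdual using fun i => (hP i).exists_dualFunction_eq hν
  refine IsLeast.csInf_eq ⟨⟨z, hz, Finset.sum_congr rfl fun i _ => (hdual i).symm⟩, ?_⟩
  rintro _ ⟨x, hx, rfl⟩
  exact Finset.sum_le_sum fun i _ => (hP i).dualFunction_le hν (hx i)

end CoupledProblem

section EdgeFlow

variable {V S : Type*}

/-- Edge variables `λ(i, j) ∈ ℝ^S`, as a Euclidean space indexed by the triples `(i, j, s)`. Pairs
`(i, j)` that are not adjacent are included, as in the algorithm. -/
abbrev EdgeFlow (V S : Type*) := EuclideanSpace ℝ (V × V × S)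

/-- The family `L i j ∈ ℝ^S` as a point of the Euclidean space of edge variables. -/
def edgeFlowOf (L : V → V → S → ℝ) : EdgeFlow V S :=
  WithLp.toLp 2 fun e => L e.1 e.2.1 e.2.2

variable (G : SimpleGraph V) [DecidableRel G.Adj]

/-- The flow with value `w i - w j` on each edge `(i, j)` and `0` on the other pairs; this is the
adjoint of the net outflow. -/
def edgeDifference (w : V → S → ℝ) : EdgeFlow V S :=
  edgeFlowOf fun i j => if G.Adj i j then w i - w j else 0

/-- The net outflow `δ i = ∑ j ∈ N_i, (λ(i, j) - λ(j, i))` of each vertex. -/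
def netOutflow [Fintype V] : EdgeFlow V S →ₗ[ℝ] V → S → ℝ where
  toFun y i s := ∑ j ∈ G.neighborFinset i, (y (i, j, s) - y (j, i, s))
  map_add' y z := by
    ext i s
    simp only [PiLp.add_apply, Pi.add_apply, ← Finset.sum_add_distrib, add_sub_add_comm]
  map_smul' c y := by
    ext i s
    simp only [PiLp.smul_apply, Pi.smul_apply, smul_eq_mul, ← mul_sub, ← Finset.mul_sum,
      RingHom.id_apply]

variable {G}

theorem edgeDifference_const (ν : S → ℝ) : edgeDifference G (fun _ => ν) = 0 := by
  ext e
  simp [edgeDifference, edgeFlowOf]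

theorem eq_of_edgeDifference_eq_zero (hG : G.Connected) {w : V → S → ℝ}
    (hw : edgeDifference G w = 0) (i j : V) : w i = w j := by
  have hadj {i j : V} (h : G.Adj i j) : w i = w j := by
    ext s
    have := congrArg (fun y : EdgeFlow V S => y (i, j, s)) hw
    simpa [edgeDifference, edgeFlowOf, h, sub_eq_zero] using this
  obtain ⟨p⟩ := hG.preconnected i j
  induction p with
  | nil => rfl
  | cons h _ ih => exact (hadj h).trans ih

variable [Fintype V]

theorem exists_norm_edgeDifference_le [Fintype S] (M : ℝ) :
    ∃ c, ∀ w : V → S → ℝ, (∀ i, w i ∈ multiplierSet S M) → ‖edgeDifference G w‖ ≤ c := by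
  have hcont : Continuous (edgeDifference (S := S) G) := by
    refine (PiLp.continuous_toLp 2 _).comp (continuous_pi fun e => ?_)
    by_cases h : G.Adj e.1 e.2.1 <;> simp only [h, if_true, if_false] <;> fun_prop
  obtain ⟨c, hc⟩ := (isCompact_univ_pi fun _ : V =>
    isCompact_multiplierSet (S := S) (M := M)).exists_bound_of_continuousOn hcont.continuousOn
  exact ⟨c, fun w hw => hc w fun i _ => hw i⟩

theorem inner_edgeDifference [Fintype S] (w : V → S → ℝ) (y : EdgeFlow V S) :
    ⟪edgeDifference G w, y⟫_ℝ = ∑ i, w i ⬝ᵥ netOutflow G y i := by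
  have hinner : ⟪edgeDifference G w, y⟫_ℝ =
      ∑ i, ∑ j, ∑ s, if G.Adj i j then w i s * y (i, j, s) - w j s * y (i, j, s) else 0 := by
    simp only [PiLp.inner_apply, Fintype.sum_prod_type]
    refine Finset.sum_congr rfl fun i _ => Finset.sum_congr rfl fun j _ =>
      Finset.sum_congr rfl fun s _ => ?_
    by_cases h : G.Adj i j <;> simp [edgeDifference, edgeFlowOf, h, sub_mul, mul_comm]
  have houtflow (i : V) : w i ⬝ᵥ netOutflow G y i =
      ∑ j, ∑ s, if G.Adj i j then w i s * y (i, j, s) - w i s * y (j, i, s) else 0 := by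
    rw [Finset.sum_comm]
    refine Finset.sum_congr rfl fun s _ => ?_
    simp only [netOutflow, LinearMap.coe_mk, AddHom.coe_mk, Finset.mul_sum, mul_sub]
    rw [← Finset.sum_filter, G.neighborFinset_eq_filter]
  have hswap : ∑ i, ∑ j, ∑ s, (if G.Adj i j then w j s * y (i, j, s) else 0) =
      ∑ i, ∑ j, ∑ s, if G.Adj i j then w i s * y (j, i, s) else 0 := by
    rw [Finset.sum_comm]
    simp only [G.adj_comm]
  have hsplit (i j : V) (a b : ℝ) : (if G.Adj i j then a - b else 0) =
      (if G.Adj i j then a else 0) - if G.Adj i j then b else 0 := by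
    rw [ite_sub_ite, sub_zero]
  rw [hinner, Finset.sum_congr rfl fun i _ => houtflow i]
  simp only [hsplit, Finset.sum_sub_distrib, hswap]

theorem sum_dotProduct_netOutflow [Fintype S] (ν : S → ℝ) (y : EdgeFlow V S) :
    ∑ i, ν ⬝ᵥ netOutflow G y i = 0 := by
  rw [← inner_edgeDifference fun _ => ν, edgeDifference_const, inner_zero_left]

-- A functional that vanishes on all net outflows has zero edge differences, so it is constant
-- over the vertices and vanishes at `d`.
theorem mem_range_netOutflow [Finite S] (hG : G.Connected) {d : V → S → ℝ}
    (hd : ∑ i, d i = 0) : d ∈ LinearMap.range (netOutflow (S := S) G) := by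
  classical
  cases nonempty_fintype S
  by_contra hnot
  obtain ⟨φ, hφd, hφ⟩ := Submodule.exists_dual_map_eq_bot_of_notMem hnot inferInstance
  let w (i : V) : S → ℝ :=
    (dotProductEquiv ℝ S).symm (φ ∘ₗ LinearMap.single ℝ (fun _ => S → ℝ) i)
  have hw (z : V → S → ℝ) : φ z = ∑ i, w i ⬝ᵥ z i := by
    have hwi (i : V) : w i ⬝ᵥ z i = φ (Pi.single i (z i)) :=
      LinearMap.congr_fun ((dotProductEquiv ℝ S).apply_symm_apply _) (z i)
    simp only [hwi, ← map_sum, Finset.univ_sum_single]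
  have hzero : edgeDifference G w = 0 := by
    rw [← inner_self_eq_zero (𝕜 := ℝ), inner_edgeDifference, ← hw]
    exact LinearMap.le_ker_iff_map.2 hφ (LinearMap.mem_range_self _ _)
  obtain ⟨i₀⟩ := hG.nonempty
  refine hφd ?_
  rw [hw, Finset.sum_congr rfl fun i _ => by rw [eq_of_edgeDifference_eq_zero hG hzero i i₀],
    ← dotProduct_sum, hd, dotProduct_zero]

end EdgeFlow

section Allocation

variable {V S : Type*} [Fintype V] {G : SimpleGraph V} [DecidableRel G.Adj] {E : V → Type*}

/-- The primal decomposition objective: the total optimal cost of the agents' relaxed problems when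
the flow `y` allocates the shared resource. -/
noncomputable def allocationCost (G : SimpleGraph V) [DecidableRel G.Adj] (X : ∀ i, Set (E i))
    (f : ∀ i, E i → ℝ) (g : ∀ i, E i → S → ℝ) (M : ℝ) (y : EdgeFlow V S) : ℝ :=
  ∑ i, relaxedValue (X i) (f i) (g i) M (netOutflow G y i)

variable [∀ i, TopologicalSpace (E i)] [∀ i, AddCommGroup (E i)] [∀ i, Module ℝ (E i)]
  {X : ∀ i, Set (E i)} {f : ∀ i, E i → ℝ} {g : ∀ i, E i → S → ℝ} {M : ℝ}
  (hP : ∀ i, IsCompactConvexProgram (X i) (f i) (g i))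

include hP

-- The flow gives every agent the same share of the slack `∑ i, g i (x i)` at an optimum `x`.
theorem exists_allocationCost_le_coupledValue [Finite S] (hG : G.Connected)
    (hM : 0 ≤ M) (hfeas : (coupledFeasibleSet X g).Nonempty) :
    ∃ y, allocationCost G X f g M y ≤ coupledValue X f g := by
  obtain ⟨x, ⟨hxX, hx⟩, hopt⟩ := exists_mem_coupledFeasibleSet_sum_eq
    (fun i => (hP i).isCompact) (fun i => (hP i).lowerSemicontinuousOn_cost)
    (fun i => (hP i).lowerSemicontinuousOn_constraint) hfeas
  have := hG.nonempty
  let share : S → ℝ := (Fintype.card V : ℝ)⁻¹ • ∑ i, g i (x i)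
  have hshare (s : S) : share s ≤ 0 := by
    simpa [share] using mul_nonpos_of_nonneg_of_nonpos
      (inv_nonneg.2 (Nat.cast_nonneg (Fintype.card V))) (hx s)
  obtain ⟨y, hy⟩ := mem_range_netOutflow hG (d := fun i => share - g i (x i)) <| by
    rw [Finset.sum_sub_distrib, Finset.sum_const, Finset.card_univ, sub_eq_zero,
      ← Nat.cast_smul_eq_nsmul ℝ, smul_inv_smul₀ (Nat.cast_ne_zero.2 Fintype.card_ne_zero)]
  refine ⟨y, hopt ▸ Finset.sum_le_sum fun i _ => ?_⟩
  have hmem : (x i, (0 : ℝ)) ∈ relaxedFeasibleSet (X i) (g i) (netOutflow G y i) :=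
    ⟨hxX i, le_rfl, fun s => by simpa [hy] using hshare s⟩
  simpa using relaxedValue_le
    ((hP i).lowerSemicontinuousOn_cost.bddBelow_of_isCompact (hP i).isCompact) hM hmem

variable [Fintype S]

theorem coupledDualFunction_le_allocationCost {ν : S → ℝ} (hν : ν ∈ multiplierSet S M)
    (y : EdgeFlow V S) : coupledDualFunction X f g ν ≤ allocationCost G X f g M y := calc
  coupledDualFunction X f g ν
      = ∑ i, dualFunction (X i) (f i) (g i) ν := coupledDualFunction_eq_sum_dualFunction hP hν.1
  _ = ∑ i, (dualFunction (X i) (f i) (g i) ν + ν ⬝ᵥ netOutflow G y i) := by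
    rw [Finset.sum_add_distrib, sum_dotProduct_netOutflow, add_zero]
  _ ≤ allocationCost G X f g M y :=
    Finset.sum_le_sum fun i _ => (hP i).dualFunction_add_le_relaxedValue hν

theorem exists_allocationCost_eq_coupledValue (hG : G.Connected)
    (hfeas : (coupledFeasibleSet X g).Nonempty) {ν : S → ℝ} (hν : ν ∈ multiplierSet S M)
    (hdual : coupledDualFunction X f g ν = coupledValue X f g) :
    ∃ y, allocationCost G X f g M y = coupledValue X f g := by
  have hM : 0 ≤ M := (Finset.sum_nonneg fun s _ => hν.1 s).trans hν.2
  obtain ⟨y, hy⟩ := exists_allocationCost_le_coupledValue hP hG hM hfeas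
  exact ⟨y, hy.antisymm (hdual ▸ coupledDualFunction_le_allocationCost hP hν y)⟩

theorem allocationCost_add_inner_le [∀ i, IsTopologicalAddGroup (E i)]
    [∀ i, ContinuousSMul ℝ (E i)] (hM : 0 ≤ M) {y : EdgeFlow V S} {μ : V → S → ℝ}
    (hμ : ∀ i, IsRelaxedDualSolution (X i) (f i) (g i) M (netOutflow G y i) (μ i))
    (z : EdgeFlow V S) :
    allocationCost G X f g M y + ⟪edgeDifference G μ, z - y⟫_ℝ ≤ allocationCost G X f g M z := by
  rw [inner_edgeDifference, allocationCost, ← Finset.sum_add_distrib]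
  refine Finset.sum_le_sum fun i _ => ?_
  calc relaxedValue (X i) (f i) (g i) M (netOutflow G y i) + μ i ⬝ᵥ netOutflow G (z - y) i
      = dualFunction (X i) (f i) (g i) (μ i) + μ i ⬝ᵥ netOutflow G z i := by
        rw [(hP i).relaxedValue_eq_of_isRelaxedDualSolution hM (hμ i), map_sub, Pi.sub_apply,
          dotProduct_sub]
        ring
    _ ≤ relaxedValue (X i) (f i) (g i) M (netOutflow G z i) :=
      (hP i).dualFunction_add_le_relaxedValue (hμ i).1

end Allocation

section Algorithm

variable {V S : Type*} [Fintype V] [Fintype S] {G : SimpleGraph V} [DecidableRel G.Adj]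
  {E : V → Type*} {X : ∀ i, Set (E i)} {f : ∀ i, E i → ℝ} {g : ∀ i, E i → S → ℝ} {M : ℝ}
  {γ : ℕ → ℝ} {lam : ℕ → V → V → S → ℝ} {x : ℕ → ∀ i, E i} {ρ : ℕ → V → ℝ} {μ : ℕ → V → S → ℝ}

/-- The iterates of the distributed primal decomposition-duality algorithm with step sizes `γ`. -/
structure IsPrimalDecompositionDualityRun (G : SimpleGraph V) [DecidableRel G.Adj]
    (X : ∀ i, Set (E i)) (f : ∀ i, E i → ℝ) (g : ∀ i, E i → S → ℝ) (M : ℝ) (γ : ℕ → ℝ)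
    (lam : ℕ → V → V → S → ℝ) (x : ℕ → ∀ i, E i) (ρ : ℕ → V → ℝ) (μ : ℕ → V → S → ℝ) : Prop where
  isRelaxedSolution : ∀ t i, IsRelaxedSolution (X i) (f i) (g i) M
    (netOutflow G (edgeFlowOf (lam t)) i) (x (t + 1) i) (ρ (t + 1) i)
  isRelaxedDualSolution : ∀ t i, IsRelaxedDualSolution (X i) (f i) (g i) M
    (netOutflow G (edgeFlowOf (lam t)) i) (μ (t + 1) i)
  update : ∀ t i j,
    (G.Adj i j → lam (t + 1) i j = lam t i j - γ t • (μ (t + 1) i - μ (t + 1) j)) ∧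
      (¬ G.Adj i j → lam (t + 1) i j = lam t i j)

namespace IsPrimalDecompositionDualityRun

variable (hrun : IsPrimalDecompositionDualityRun G X f g M γ lam x ρ μ)

include hrun

theorem edgeFlowOf_succ (t : ℕ) :
    edgeFlowOf (lam (t + 1)) = edgeFlowOf (lam t) - γ t • edgeDifference G (μ (t + 1)) := by
  ext ⟨i, j, s⟩
  by_cases h : G.Adj i j
  · simp [edgeFlowOf, edgeDifference, h, (hrun.update t i j).1 h]
  · simp [edgeFlowOf, edgeDifference, h, (hrun.update t i j).2 h]

theorem sum_cost_eq_allocationCost (t : ℕ) :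
    ∑ i, (f i (x (t + 1) i) + M * ρ (t + 1) i) =
      allocationCost G X f g M (edgeFlowOf (lam t)) :=
  Finset.sum_congr rfl fun i _ => (hrun.isRelaxedSolution t i).relaxedValue_eq.symm

end IsPrimalDecompositionDualityRun

theorem stmt_18_general [∀ i, TopologicalSpace (E i)] [∀ i, AddCommGroup (E i)]
    [∀ i, Module ℝ (E i)] [∀ i, IsTopologicalAddGroup (E i)] [∀ i, ContinuousSMul ℝ (E i)]
    (hG : G.Connected) (hP : ∀ i, IsCompactConvexProgram (X i) (f i) (g i))
    (hfeas : (coupledFeasibleSet X g).Nonempty) {μstar : S → ℝ}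
    (hμstar : μstar ∈ multiplierSet S M)
    (hdual : coupledDualFunction X f g μstar = coupledValue X f g)
    (hγ : ∀ t, 0 ≤ γ t) (hdiv : Tendsto (fun T => ∑ t ∈ Finset.range T, γ t) atTop atTop)
    (hsq : Summable fun t => γ t ^ 2)
    (hrun : IsPrimalDecompositionDualityRun G X f g M γ lam x ρ μ) :
    Tendsto (fun t => ∑ i, (f i (x t i) + M * ρ t i)) atTop (𝓝 (coupledValue X f g)) := by
  have hM : 0 ≤ M := (Finset.sum_nonneg fun s _ => hμstar.1 s).trans hμstar.2
  obtain ⟨ystar, hystar⟩ := exists_allocationCost_eq_coupledValue hP hG hfeas hμstar hdual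
  obtain ⟨c, hc⟩ := exists_norm_edgeDifference_le (G := G) (S := S) M
  rw [← tendsto_add_atTop_iff_nat 1]
  simp only [hrun.sum_cost_eq_allocationCost, ← hystar]
  refine tendsto_of_subgradient_step hγ
    ((not_summable_iff_tendsto_nat_atTop_of_nonneg hγ).2 hdiv) hsq (fun t => ?_)
    (fun t => allocationCost_add_inner_le hP hM (hrun.isRelaxedDualSolution t))
    (fun t => hc _ fun i => (hrun.isRelaxedDualSolution t i).1) hrun.edgeFlowOf_succ
  rw [hystar, ← hdual]
  exact coupledDualFunction_le_allocationCost hP hμstar _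

end Algorithm

/-- Theorem 1(i) of the paper: cost convergence of the DPDD algorithm.
Under the Slater condition, the exact-penalty condition `M > ∑_s μ*_s` on a dual
optimal multiplier `μ*`, and diminishing non-summable square-summable step sizes,
the sequence of local costs `∑_i (f_i(x_i^t) + M ρ_i^t)` produced by the
distributed primal decomposition-duality algorithm converges to the optimal cost
`f*` of the constraint-coupled problem. -/
theorem stmt_18 {N : ℕ} (hN : 1 ≤ N) {S : Type} [Fintype S] [Nonempty S]
    (G : SimpleGraph (Fin N)) [DecidableRel G.Adj] (hG : G.Connected)
    (n : Fin N → ℕ)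
    (X : ∀ i, Set (Fin (n i) → ℝ))
    (hXne : ∀ i, (X i).Nonempty) (hXcp : ∀ i, IsCompact (X i)) (hXcv : ∀ i, Convex ℝ (X i))
    (f : ∀ i, (Fin (n i) → ℝ) → ℝ) (hf : ∀ i, ConvexOn ℝ Set.univ (f i))
    (g : ∀ i, (Fin (n i) → ℝ) → (S → ℝ))
    (hg : ∀ i s, ConvexOn ℝ Set.univ (fun x => g i x s))
    -- (a) Slater condition and optimal value
    (hSlater : ∃ xbar : ∀ i, Fin (n i) → ℝ,
      (∀ i, xbar i ∈ X i) ∧ ∀ s, ∑ i, g i (xbar i) s < 0)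
    (fstar : ℝ)
    (hfstar : fstar = sInf {y | ∃ x : ∀ i, Fin (n i) → ℝ,
      (∀ i, x i ∈ X i) ∧ (∀ s, ∑ i, g i (x i) s ≤ 0) ∧ ∑ i, f i (x i) = y})
    -- (b) geometric multiplier and penalty parameter
    (μstar : S → ℝ) (hμpos : ∀ s, 0 ≤ μstar s)
    (hμopt : sInf {y | ∃ x : ∀ i, Fin (n i) → ℝ, (∀ i, x i ∈ X i) ∧
      (∑ i, (f i (x i) + ∑ s, μstar s * g i (x i) s)) = y} = fstar)
    (M : ℝ) (hM : M > ∑ s, μstar s)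
    -- (c) step sizes
    (γ : ℕ → ℝ) (hγpos : ∀ t, 0 ≤ γ t)
    (hγdiv : Filter.Tendsto (fun T => ∑ t ∈ Finset.range T, γ t) Filter.atTop Filter.atTop)
    (hγsq : Summable (fun t => (γ t) ^ 2))
    -- algorithm iterates
    (lam : ℕ → Fin N → Fin N → (S → ℝ))
    (x : ℕ → ∀ i, Fin (n i) → ℝ) (ρ : ℕ → Fin N → ℝ) (μ : ℕ → Fin N → (S → ℝ))
    -- (1) primal update: (x_i^{t+1}, ρ_i^{t+1}) solves the local relaxed problem
    (hprim : ∀ t i,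
      (x (t+1) i ∈ X i ∧ 0 ≤ ρ (t+1) i ∧
        (∀ s, g i (x (t+1) i) s
          + (∑ j ∈ G.neighborFinset i, (lam t i j s - lam t j i s)) ≤ ρ (t+1) i))
      ∧ ∀ (x' : Fin (n i) → ℝ) (r : ℝ), x' ∈ X i → 0 ≤ r →
          (∀ s, g i x' s + (∑ j ∈ G.neighborFinset i, (lam t i j s - lam t j i s)) ≤ r) →
          f i (x (t+1) i) + M * ρ (t+1) i ≤ f i x' + M * r)
    -- (2) dual update: μ_i^{t+1} maximizes q_i(·) + ⟨·, δ_i^t⟩ over Δ_M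
    (hdual : ∀ t i,
      ((∀ s, 0 ≤ μ (t+1) i s) ∧ ∑ s, μ (t+1) i s ≤ M)
      ∧ ∀ ν : S → ℝ, (∀ s, 0 ≤ ν s) → ∑ s, ν s ≤ M →
          sInf {y | ∃ z ∈ X i, f i z + ∑ s, ν s * g i z s = y}
            + ∑ s, ν s * (∑ j ∈ G.neighborFinset i, (lam t i j s - lam t j i s))
          ≤ sInf {y | ∃ z ∈ X i, f i z + ∑ s, μ (t+1) i s * g i z s = y}
            + ∑ s, μ (t+1) i s * (∑ j ∈ G.neighborFinset i, (lam t i j s - lam t j i s)))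
    -- (3) multiplier update
    (hlam : ∀ t i j, (G.Adj i j →
        lam (t+1) i j = lam t i j - γ t • (μ (t+1) i - μ (t+1) j))
      ∧ (¬ G.Adj i j → lam (t+1) i j = lam t i j)) :
    Filter.Tendsto (fun t => ∑ i, (f i (x t i) + M * ρ t i))
      Filter.atTop (nhds fstar) := by
  have hrun : IsPrimalDecompositionDualityRun G X f g M γ lam x ρ μ := ⟨hprim, hdual, hlam⟩
  have hP (i : Fin N) : IsCompactConvexProgram (X i) (f i) (g i) :=
    .of_convexOn_univ (hXne i) (hXcp i) (hXcv i) (hf i) (hg i)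
  subst hfstar
  exact stmt_18_general hG hP (hSlater.imp fun _ h => ⟨h.1, fun s => (h.2 s).le⟩)
    ⟨hμpos, hM.le⟩ hμopt hγpos hγdiv hγsq hrun
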